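/- Fix ζ > 0. For each positive integer M, let γ_M be a real random variable with the Gamma(M, ζ) distribution, i.e. with probability density f_M(x) = x^{M-1} e^{-x/ζ} / (Γ(M) ζ^M) for x ≥ 0. Then the variance of the instantaneous rate vanishes as the number of antennas grows: lim_{M → ∞} Var[log(1 + γ_M)] = 0. -/

import Mathlib

open MeasureTheory ProbabilityTheory Filter

/-!
For `X > 0` with mean `m`, the inequality `(log u)² ≤ u + u⁻¹ - 2` at `u = (c + X) / (c + m)` gives
`(log (c + X) - log (c + m))² ≤ X / m + m / X - 2`, hence `Var[log (c + X)] ≤ E[X] E[X⁻¹] - 1`.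
For a gamma variable of shape `a > 1` and any rate, the right-hand side is `1 / (a - 1)`.
-/

lemma sq_log_le_add_inv_sub_two {u : ℝ} (hu : 0 < u) : Real.log u ^ 2 ≤ u + u⁻¹ - 2 := by
  have hsqrt : 0 < √u := Real.sqrt_pos.mpr hu
  -- `u + u⁻¹ - 2 = (2 sinh t)²` for `t = log √u`, and `|t| ≤ |sinh t|`.
  have habs : |Real.log √u| ≤ |Real.sinh (Real.log √u)| := by
    rw [Real.abs_sinh]
    exact Real.self_le_sinh_iff.mpr (abs_nonneg _)
  calc Real.log u ^ 2 = 4 * Real.log √u ^ 2 := by rw [Real.log_sqrt hu.le]; ring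
    _ ≤ 4 * Real.sinh (Real.log √u) ^ 2 := by gcongr 4 * ?_; exact sq_le_sq.mpr habs
    _ = √u ^ 2 + (√u ^ 2)⁻¹ - 2 := by rw [Real.sinh_log hsqrt]; field_simp; ring
    _ = u + u⁻¹ - 2 := by rw [Real.sq_sqrt hu.le]

lemma sq_log_sub_log_le {x y : ℝ} (hx : 0 < x) (hy : 0 < y) :
    (Real.log x - Real.log y) ^ 2 ≤ (x - y) ^ 2 / (x * y) := by
  rw [← Real.log_div hx.ne' hy.ne']
  refine (sq_log_le_add_inv_sub_two (div_pos hx hy)).trans_eq ?_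
  field_simp
  ring

lemma sq_log_const_add_sub_log_const_add_le {c x y : ℝ} (hc : 0 ≤ c) (hx : 0 < x) (hy : 0 < y) :
    (Real.log (c + x) - Real.log (c + y)) ^ 2 ≤ y⁻¹ * x + y * x⁻¹ - 2 :=
  calc (Real.log (c + x) - Real.log (c + y)) ^ 2
      ≤ ((c + x) - (c + y)) ^ 2 / ((c + x) * (c + y)) :=
        sq_log_sub_log_le (by positivity) (by positivity)
    _ = (x - y) ^ 2 / ((c + x) * (c + y)) := by rw [add_sub_add_left_eq_sub]
    _ ≤ (x - y) ^ 2 / (x * y) := by gcongr <;> linarith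
    _ = y⁻¹ * x + y * x⁻¹ - 2 := by field_simp; ring

lemma variance_le_integral_sq_sub_const {Ω : Type*} {mΩ : MeasurableSpace Ω} {μ : Measure Ω}
    [IsProbabilityMeasure μ] {X : Ω → ℝ} (hX : AEStronglyMeasurable X μ) (b : ℝ) :
    Var[X; μ] ≤ ∫ ω, (X ω - b) ^ 2 ∂μ := by
  rw [← variance_sub_const hX b]
  exact variance_le_expectation_sq (hX.sub aestronglyMeasurable_const)

lemma integral_pos_of_ae_pos {Ω : Type*} {mΩ : MeasurableSpace Ω} {μ : Measure Ω} [NeZero μ]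
    {X : Ω → ℝ} (hX : Integrable X μ) (hpos : ∀ᵐ ω ∂μ, 0 < X ω) : 0 < ∫ ω, X ω ∂μ := by
  have hnonneg : 0 ≤ᵐ[μ] X := hpos.mono fun _ h ↦ h.le
  refine (integral_nonneg_of_ae hnonneg).lt_of_ne' fun hzero ↦ ?_
  have hX_zero := (integral_eq_zero_iff_of_nonneg_ae hnonneg hX).mp hzero
  obtain ⟨ω, hω, hω_zero⟩ := (hpos.and hX_zero).exists
  exact hω.ne' hω_zero

theorem variance_log_const_add_le {Ω : Type*} {mΩ : MeasurableSpace Ω} {μ : Measure Ω}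
    [IsProbabilityMeasure μ] {X : Ω → ℝ} {c : ℝ} (hc : 0 ≤ c) (hpos : ∀ᵐ ω ∂μ, 0 < X ω)
    (hX : Integrable X μ) (hX_inv : Integrable (fun ω ↦ (X ω)⁻¹) μ) :
    Var[fun ω ↦ Real.log (c + X ω); μ] ≤ (∫ ω, X ω ∂μ) * ∫ ω, (X ω)⁻¹ ∂μ - 1 := by
  set m := ∫ ω, X ω ∂μ
  have hm_pos : 0 < m := integral_pos_of_ae_pos hX hpos
  have hlog : AEStronglyMeasurable (fun ω ↦ Real.log (c + X ω)) μ :=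
    (hX.aemeasurable.const_add c).log.aestronglyMeasurable
  have hsum : Integrable (fun ω ↦ m⁻¹ * X ω + m * (X ω)⁻¹) μ :=
    (hX.const_mul m⁻¹).add (hX_inv.const_mul m)
  calc Var[fun ω ↦ Real.log (c + X ω); μ]
      ≤ ∫ ω, (Real.log (c + X ω) - Real.log (c + m)) ^ 2 ∂μ :=
        variance_le_integral_sq_sub_const hlog _
    _ ≤ ∫ ω, (m⁻¹ * X ω + m * (X ω)⁻¹ - 2) ∂μ :=
        integral_mono_of_nonneg (ae_of_all _ fun _ ↦ sq_nonneg _)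
          (hsum.sub (integrable_const 2))
          (hpos.mono fun _ hω ↦ sq_log_const_add_sub_log_const_add_le hc hω hm_pos)
    _ = m⁻¹ * m + m * ∫ ω, (X ω)⁻¹ ∂μ - 2 := by
        rw [integral_sub hsum (integrable_const 2),
          integral_add (hX.const_mul m⁻¹) (hX_inv.const_mul m), integral_const_mul,
          integral_const_mul, integral_const, probReal_univ, one_smul]
    _ = m * ∫ ω, (X ω)⁻¹ ∂μ - 1 := by rw [inv_mul_cancel₀ hm_pos.ne']; ring

lemma measurable_gammaPDF (a r : ℝ) : Measurable (gammaPDF a r) :=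
  (measurable_gammaPDFReal a r).ennreal_ofReal

lemma ae_pos_gammaMeasure (a r : ℝ) : ∀ᵐ x ∂gammaMeasure a r, 0 < x := by
  rw [gammaMeasure, ae_withDensity_iff (measurable_gammaPDF a r)]
  filter_upwards [Measure.ae_ne volume 0] with x hx_ne hx_pdf
  by_contra! hx
  exact hx_pdf (gammaPDF_of_neg (hx.lt_of_ne hx_ne))

section Moments

variable {a r : ℝ}

lemma integral_gammaMeasure {E : Type*} [NormedAddCommGroup E] [NormedSpace ℝ E]
    (ha : 0 < a) (hr : 0 < r) (f : ℝ → E) :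
    ∫ x, f x ∂gammaMeasure a r =
      ∫ x in Set.Ioi 0, (r ^ a / Real.Gamma a * x ^ (a - 1) * Real.exp (-(r * x))) • f x := by
  have hmem : ∀ᵐ x ∂gammaMeasure a r, x ∈ Set.Ioi 0 := ae_pos_gammaMeasure a r
  calc ∫ x, f x ∂gammaMeasure a r
      = ∫ x in Set.Ioi 0, f x ∂gammaMeasure a r := by
        rw [Measure.restrict_eq_self_of_ae_mem hmem]
    _ = ∫ x in Set.Ioi 0, (gammaPDF a r x).toReal • f x :=
        setIntegral_withDensity_eq_setIntegral_toReal_smul (measurable_gammaPDF a r)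
          (ae_of_all _ fun _ ↦ ENNReal.ofReal_lt_top) f measurableSet_Ioi
    _ = _ := setIntegral_congr_fun measurableSet_Ioi fun x (hx : 0 < x) ↦ by
        simp only [gammaPDF, ENNReal.toReal_ofReal (gammaPDFReal_nonneg ha hr x)]
        rw [gammaPDFReal, if_pos hx.le]

lemma integral_rpow_gammaMeasure {s : ℝ} (ha : 0 < a) (hr : 0 < r) (has : 0 < a + s) :
    ∫ x, x ^ s ∂gammaMeasure a r = Real.Gamma (a + s) / (Real.Gamma a * r ^ s) := by
  calc ∫ x, x ^ s ∂gammaMeasure a r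
      = ∫ x in Set.Ioi 0, r ^ a / Real.Gamma a * (x ^ (a + s - 1) * Real.exp (-(r * x))) := by
        rw [integral_gammaMeasure ha hr]
        refine setIntegral_congr_fun measurableSet_Ioi fun x (hx : 0 < x) ↦ ?_
        simp only [show a + s - 1 = a - 1 + s by ring, Real.rpow_add hx, smul_eq_mul]
        ring
    _ = r ^ a / Real.Gamma a * ((1 / r) ^ (a + s) * Real.Gamma (a + s)) := by
        rw [integral_const_mul, Real.integral_rpow_mul_exp_neg_mul_Ioi has hr]
    _ = Real.Gamma (a + s) / (Real.Gamma a * r ^ s) := by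
        rw [one_div, Real.inv_rpow hr.le, Real.rpow_add hr]
        field_simp

lemma integrable_rpow_gammaMeasure {s : ℝ} (ha : 0 < a) (hr : 0 < r) (has : 0 < a + s) :
    Integrable (fun x ↦ x ^ s) (gammaMeasure a r) := by
  refine .of_integral_ne_zero ?_
  rw [integral_rpow_gammaMeasure ha hr has]
  positivity

lemma integrable_id_gammaMeasure (ha : 0 < a) (hr : 0 < r) :
    Integrable (fun x ↦ x) (gammaMeasure a r) := by
  simpa only [Real.rpow_one] using integrable_rpow_gammaMeasure (s := 1) ha hr (by positivity)

lemma integral_id_gammaMeasure (ha : 0 < a) (hr : 0 < r) :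
    ∫ x, x ∂gammaMeasure a r = a / r := by
  have h := integral_rpow_gammaMeasure (s := 1) ha hr (by positivity)
  simp only [Real.rpow_one, Real.Gamma_add_one ha.ne'] at h
  rw [h, mul_comm (Real.Gamma a), mul_div_mul_right _ _ (Real.Gamma_pos_of_pos ha).ne']

lemma integrable_inv_gammaMeasure (ha : 1 < a) (hr : 0 < r) :
    Integrable (fun x ↦ x⁻¹) (gammaMeasure a r) := by
  simpa only [Real.rpow_neg_one] using
    integrable_rpow_gammaMeasure (s := -1) (by linarith) hr (by linarith)

lemma integral_inv_gammaMeasure (ha : 1 < a) (hr : 0 < r) :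
    ∫ x, x⁻¹ ∂gammaMeasure a r = r / (a - 1) := by
  have ha' : 0 < a - 1 := sub_pos.mpr ha
  have hGamma : Real.Gamma a = (a - 1) * Real.Gamma (a - 1) := by
    rw [← Real.Gamma_add_one ha'.ne', sub_add_cancel]
  have h := integral_rpow_gammaMeasure (s := -1) (by linarith) hr (by linarith : 0 < a + -1)
  simp only [Real.rpow_neg_one, ← sub_eq_add_neg] at h
  rw [h, hGamma]
  have := (Real.Gamma_pos_of_pos ha').ne'
  field_simp

end Moments

theorem variance_log_const_add_gammaMeasure_le {a r c : ℝ} (ha : 1 < a) (hr : 0 < r)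
    (hc : 0 ≤ c) : Var[fun x ↦ Real.log (c + x); gammaMeasure a r] ≤ (a - 1)⁻¹ := by
  have ha_pos : 0 < a := by linarith
  have ha_sub : a - 1 ≠ 0 := (sub_pos.mpr ha).ne'
  have := isProbabilityMeasure_gammaMeasure ha_pos hr
  refine (variance_log_const_add_le hc (ae_pos_gammaMeasure a r)
    (integrable_id_gammaMeasure ha_pos hr) (integrable_inv_gammaMeasure ha hr)).trans_eq ?_
  rw [integral_id_gammaMeasure ha_pos hr, integral_inv_gammaMeasure ha hr]
  field_simp
  ring

theorem variance_log_one_add_gamma_tendsto_zero_general {ι : Type*} {l : Filter ι} {a r c : ι → ℝ}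
    (ha : Tendsto a l atTop) (hr : ∀ᶠ i in l, 0 < r i) (hc : ∀ᶠ i in l, 0 ≤ c i)
    {Ω : ι → Type*} {mΩ : ∀ i, MeasurableSpace (Ω i)} {P : ∀ i, Measure (Ω i)}
    {γ : ∀ i, Ω i → ℝ} (hγ : ∀ᶠ i in l, (P i).map (γ i) = gammaMeasure (a i) (r i)) :
    Tendsto (fun i ↦ Var[fun ω ↦ Real.log (c i + γ i ω); P i]) l (nhds 0) := by
  have hbound : Tendsto (fun i ↦ (a i - 1)⁻¹) l (nhds 0) :=
    (tendsto_atTop_add_const_right l (-1) ha).inv_tendsto_atTop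
  refine squeeze_zero' (.of_forall fun i ↦ variance_nonneg _ _) ?_ hbound
  filter_upwards [ha.eventually_gt_atTop 1, hr, hc, hγ] with i ha_i hr_i hc_i hγ_i
  have := isProbabilityMeasure_gammaMeasure (zero_lt_one.trans ha_i) hr_i
  have hγ_meas : AEMeasurable (γ i) (P i) :=
    aemeasurable_of_map_neZero (by rw [hγ_i]; infer_instance)
  have hlog : Measurable fun x ↦ Real.log (c i + x) := by fun_prop
  calc Var[fun ω ↦ Real.log (c i + γ i ω); P i]
      = Var[fun x ↦ Real.log (c i + x); gammaMeasure (a i) (r i)] := by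
        rw [← hγ_i, variance_map hlog.aemeasurable hγ_meas, Function.comp_def]
    _ ≤ (a i - 1)⁻¹ := variance_log_const_add_gammaMeasure_le ha_i hr_i hc_i

/-- Vanishing rate variance: if `γ_M ~ Gamma(M, ζ)` for each `M ≥ 1` with `ζ > 0` fixed, then
`Var[log(1 + γ_M)] → 0` as `M → ∞`. -/
theorem variance_log_one_add_gamma_tendsto_zero
    (ζ : ℝ) (hζ : 0 < ζ)
    {Ω : Type*} [MeasurableSpace Ω] (P : Measure Ω) [IsProbabilityMeasure P]
    (γ : ℕ → Ω → ℝ)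
    (hγ : ∀ M : ℕ, 0 < M → Measure.map (γ M) P = gammaMeasure (M : ℝ) ζ⁻¹) :
    Tendsto (fun M : ℕ => variance (fun ω => Real.log (1 + γ M ω)) P) atTop (nhds 0) :=
  variance_log_one_add_gamma_tendsto_zero_general tendsto_natCast_atTop_atTop
    (.of_forall fun _ ↦ inv_pos.mpr hζ) (.of_forall fun _ ↦ zero_le_one)
    ((eventually_gt_atTop 0).mono hγ)
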